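/- arXiv:0706.0089 — 2 statements merged into one kernel-verified Lean document; each statement's English description precedes it below -/
import Mathlib

section
/- Let n ≥ 2. The homomorphism p : S̃_n → S_n is surjective, the element z is central in S̃_n and has order exactly 2, and the kernel of p is exactly the two-element central subgroup {1, z}. Consequently S̃_n is a central extension of the symmetric group S_n by Z/2Z. -/
open Equiv

/-- Generator `z` as an element of the free group. -/
def zF (n : ℕ) : FreeGroup (Fin (n-1) ⊕ Unit) := FreeGroup.of (Sum.inr ())

/-- Generator `τ̃ᵢ` as an element of the free group. -/
def tF (n : ℕ) (i : Fin (n-1)) : FreeGroup (Fin (n-1) ⊕ Unit) := FreeGroup.of (Sum.inl i)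

/-- Relations of the spin extension of the symmetric group. -/
def spinRels (n : ℕ) : Set (FreeGroup (Fin (n-1) ⊕ Unit)) :=
  {zF n * zF n} ∪
  {w | ∃ i : Fin (n-1), w = zF n * tF n i * (tF n i * zF n)⁻¹} ∪
  {w | ∃ i : Fin (n-1), w = tF n i * tF n i * (zF n)⁻¹} ∪
  {w | ∃ i j : Fin (n-1), 1 < |(i : ℤ) - (j : ℤ)| ∧ w = tF n i * tF n j * (zF n * tF n j * tF n i)⁻¹} ∪
  {w | ∃ i j : Fin (n-1), (j : ℕ) = (i : ℕ) + 1 ∧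
        w = tF n i * tF n j * tF n i * (tF n j * tF n i * tF n j)⁻¹}

/-- The spin extension `S̃ₙ` of the symmetric group, as a presented group. -/
abbrev SpinSym (n : ℕ) := PresentedGroup (spinRels n)

/-- The central element `z` of `S̃ₙ`. -/
def zt (n : ℕ) : SpinSym n := PresentedGroup.of (Sum.inr ())

/-- The generator `τ̃ᵢ` of `S̃ₙ`. -/
def tt (n : ℕ) (i : Fin (n-1)) : SpinSym n := PresentedGroup.of (Sum.inl i)

/-- `i` as an element of `Fin n`. -/
def finL (n : ℕ) (i : Fin (n-1)) : Fin n := ⟨i, by have := i.2; omega⟩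

/-- `i+1` as an element of `Fin n`. -/
def finR (n : ℕ) (i : Fin (n-1)) : Fin n := ⟨(i : ℕ) + 1, by have := i.2; omega⟩

/-- `τ̃ₖ` for a natural number index, `1` out of range. -/
def ttN (n : ℕ) (k : ℕ) : SpinSym n := if h : k < n - 1 then tt n ⟨k, h⟩ else 1

/-- For `i ≤ j`, the word `τ̃ᵢ·τ̃ᵢ₊₁⋯τ̃ⱼ₋₂·τ̃ⱼ₋₁·τ̃ⱼ₋₂⋯τ̃ᵢ₊₁·τ̃ᵢ` (equal to `1` when `i = j`). -/
def ttilCore (n i j : ℕ) : SpinSym n :=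
  (((List.range' i (j - i)) ++ (List.range' i (j - 1 - i)).reverse).map (ttN n)).prod

/-- The lifted transpositions `τ̃_{i,j}`, with `τ̃_{j,i} = z·τ̃_{i,j}` for `i < j`,
and `τ̃_{k,k} = 1`. -/
def ttil (n i j : ℕ) : SpinSym n := if j < i then zt n * ttilCore n j i else ttilCore n i j

/-! ### Coxeter generators of the symmetric group -/

section Coxeter

variable {G : Type*} [Group G]

/-- The descending word `s (j + m - 1) * ⋯ * s (j + 1) * s j` of length `m`. -/
def descWord (s : ℕ → G) (j : ℕ) : ℕ → G
  | 0 => 1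
  | m + 1 => s (j + m) * descWord s j m

theorem descWord_succ' (s : ℕ → G) (j m : ℕ) :
    descWord s j (m + 1) = descWord s (j + 1) m * s j := by
  induction m with
  | zero => simp [descWord]
  | succ m ih =>
    rw [descWord, ih, descWord, mul_assoc, show j + (m + 1) = j + 1 + m by omega]

variable {n : ℕ} {s : ℕ → G}

/-- The Coxeter relations of type `A` for the elements `s i`, `i + 1 < n`. -/
structure IsCoxeterA (n : ℕ) (s : ℕ → G) : Prop where
  mul_self : ∀ i, i + 1 < n → s i * s i = 1
  comm : ∀ i j, i + 1 < j → j + 1 < n → Commute (s i) (s j)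
  braid : ∀ i, i + 2 < n → s i * s (i + 1) * s i = s (i + 1) * s i * s (i + 1)

namespace IsCoxeterA

theorem commute_descWord_of_lt (hs : IsCoxeterA n s) {i j m : ℕ} (hij : i + 1 < j)
    (hn : j + m < n) : Commute (s i) (descWord s j m) := by
  induction m with
  | zero => exact Commute.one_right _
  | succ m ih => exact (hs.comm i (j + m) (by omega) (by omega)).mul_right (ih (by omega))

theorem commute_descWord_of_gt (hs : IsCoxeterA n s) {i j m : ℕ} (hij : j + m < i + 1)
    (hn : i + 2 < n) : Commute (s (i + 1)) (descWord s j m) := by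
  induction m with
  | zero => exact Commute.one_right _
  | succ m ih => exact (hs.comm (j + m) (i + 1) (by omega) (by omega)).symm.mul_right (ih (by omega))

theorem descWord_mul_of_gt (hs : IsCoxeterA n s) {j a b : ℕ} (hn : j + a + 2 + b < n) :
    descWord s j (a + 2 + b) * s (j + a + 1) = s (j + a) * descWord s j (a + 2 + b) := by
  induction b with
  | zero =>
    have hc := (hs.commute_descWord_of_gt (i := j + a) (j := j) (m := a) (by omega) (by omega)).eq
    have hb := hs.braid (j + a) (by omega)
    simp only [descWord]
    rw [show j + (a + 1) = j + a + 1 by omega, mul_assoc, mul_assoc, ← hc, ← mul_assoc, ← mul_assoc,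
      ← hb]
    simp only [mul_assoc]
  | succ b ih =>
    have hc := (hs.comm (j + a) (j + (a + 2 + b)) (by omega) (by omega)).eq
    rw [← add_assoc, descWord, mul_assoc, ih (by omega), ← mul_assoc, ← hc, mul_assoc]

/-- Every element of the subgroup generated by `s 0, …, s k` lies in a coset of the subgroup
generated by `s 0, …, s (k - 1)` represented by a descending word starting at `s k`. -/
theorem exists_eq_mul_descWord (hs : IsCoxeterA n s) {k : ℕ} (hk : k + 1 < n) {g : G}
    (hg : g ∈ Subgroup.closure (s '' Set.Iio (k + 1))) :
    ∃ h ∈ Subgroup.closure (s '' Set.Iio k), ∃ j m, j + m = k + 1 ∧ g = h * descWord s j m := by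
  have mem {i : ℕ} (hi : i < k) : s i ∈ Subgroup.closure (s '' Set.Iio k) :=
    Subgroup.subset_closure ⟨i, hi, rfl⟩
  have step {i : ℕ} (hi : i < k + 1) {x : G}
      (hx : ∃ h ∈ Subgroup.closure (s '' Set.Iio k), ∃ j m, j + m = k + 1 ∧ x = h * descWord s j m) :
      ∃ h ∈ Subgroup.closure (s '' Set.Iio k), ∃ j m,
        j + m = k + 1 ∧ x * s i = h * descWord s j m := by
    obtain ⟨h, hh, j, m, hjm, rfl⟩ := hx
    rcases lt_trichotomy (i + 1) j with hij | hij | hij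
    · refine ⟨h * s i, mul_mem hh (mem (by omega)), j, m, hjm, ?_⟩
      rw [mul_assoc, mul_assoc, (hs.commute_descWord_of_lt hij (by omega)).eq]
    · subst hij
      exact ⟨h, hh, i, m + 1, by omega, by rw [descWord_succ', mul_assoc]⟩
    · rcases (show j ≤ i by omega).eq_or_lt with hij' | hij'
      · subst hij'
        obtain ⟨m, rfl⟩ : ∃ m', m = m' + 1 := ⟨m - 1, by omega⟩
        refine ⟨h, hh, j + 1, m, by omega, ?_⟩
        rw [descWord_succ', mul_assoc, mul_assoc, hs.mul_self j (by omega), mul_one]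
      · obtain ⟨a, rfl⟩ : ∃ a, i = j + a + 1 := ⟨i - j - 1, by omega⟩
        obtain ⟨b, rfl⟩ : ∃ b, m = a + 2 + b := ⟨m - a - 2, by omega⟩
        refine ⟨h * s (j + a), mul_mem hh (mem (by omega)), j, a + 2 + b, hjm, ?_⟩
        rw [mul_assoc, mul_assoc, hs.descWord_mul_of_gt (by omega)]
  induction hg using Subgroup.closure_induction_right with
  | one => exact ⟨1, one_mem _, k + 1, 0, rfl, by simp [descWord]⟩
  | mul_right x _ y hy ih =>
    obtain ⟨i, hi, rfl⟩ := hy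
    exact step hi ih
  | mul_inv_cancel x _ y hy ih =>
    obtain ⟨i, hi, rfl⟩ := hy
    have hi' : i < k + 1 := hi
    rw [inv_eq_of_mul_eq_one_left (hs.mul_self i (by omega))]
    exact step hi ih

variable {p : G →* Equiv.Perm (Fin n)}

theorem map_descWord_apply
    (hp : ∀ i (hi : i + 1 < n), p (s i) = Equiv.swap ⟨i, by omega⟩ ⟨i + 1, hi⟩)
    (j m : ℕ) (hjm : j + m < n) :
    p (descWord s j m) ⟨j, by omega⟩ = ⟨j + m, hjm⟩ := by
  induction m with
  | zero => simp [descWord]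
  | succ m ih =>
    rw [descWord, map_mul, Equiv.Perm.mul_apply, ih (by omega), hp (j + m) hjm,
      Equiv.swap_apply_left]
    rfl

theorem map_apply_of_mem_closure
    (hp : ∀ i (hi : i + 1 < n), p (s i) = Equiv.swap ⟨i, by omega⟩ ⟨i + 1, hi⟩)
    {k : ℕ} (hk : k + 1 < n) {g : G} (hg : g ∈ Subgroup.closure (s '' Set.Iio k)) :
    p g ⟨k + 1, hk⟩ = ⟨k + 1, hk⟩ := by
  have hle : Subgroup.closure (s '' Set.Iio k) ≤
      (MulAction.stabilizer (Equiv.Perm (Fin n)) (⟨k + 1, hk⟩ : Fin n)).comap p := by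
    rw [Subgroup.closure_le]
    rintro _ ⟨i, hi, rfl⟩
    have hi' : i < k := hi
    simp only [Subgroup.coe_comap, Set.mem_preimage, SetLike.mem_coe, MulAction.mem_stabilizer_iff,
      Equiv.Perm.smul_def, hp i (by omega)]
    apply Equiv.swap_apply_of_ne_of_ne <;> simp only [ne_eq, Fin.mk.injEq] <;> omega
  exact hle hg

/-- A homomorphism sending Coxeter generators to adjacent transpositions is injective on the
subgroup they generate. -/
theorem eq_one_of_map_eq_one (hs : IsCoxeterA n s)
    (hp : ∀ i (hi : i + 1 < n), p (s i) = Equiv.swap ⟨i, by omega⟩ ⟨i + 1, hi⟩)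
    {k : ℕ} (hk : k < n) {g : G} (hg : g ∈ Subgroup.closure (s '' Set.Iio k)) (hpg : p g = 1) :
    g = 1 := by
  induction k generalizing g with
  | zero => simpa using hg
  | succ k ih =>
    obtain ⟨h, hh, j, m, hjm, rfl⟩ := hs.exists_eq_mul_descWord hk hg
    have hfix : p (h * descWord s j m) ⟨j, by omega⟩ = ⟨k + 1, hk⟩ := by
      rw [map_mul, Equiv.Perm.mul_apply, map_descWord_apply hp j m (by omega)]
      simp only [hjm]
      exact map_apply_of_mem_closure hp hk hh
    rw [hpg, Equiv.Perm.one_apply, Fin.mk.injEq] at hfix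
    obtain rfl : m = 0 := by omega
    rw [descWord, mul_one] at hpg ⊢
    exact ih (by omega) hh hpg

end IsCoxeterA

end Coxeter

/-! ### Relations in the spin extension -/

section Relations

variable (n : ℕ)

theorem zt_mul_self : zt n * zt n = 1 :=
  PresentedGroup.one_of_mem (rels := spinRels n) (x := zF n * zF n)
    (.inl (.inl (.inl (.inl rfl))))

theorem zt_mul_tt (i : Fin (n - 1)) : zt n * tt n i = tt n i * zt n :=
  PresentedGroup.mk_eq_mk_of_mul_inv_mem (rels := spinRels n)
    (x := zF n * tF n i) (y := tF n i * zF n) (.inl (.inl (.inl (.inr ⟨i, rfl⟩))))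

theorem tt_mul_self (i : Fin (n - 1)) : tt n i * tt n i = zt n :=
  PresentedGroup.mk_eq_mk_of_mul_inv_mem (rels := spinRels n)
    (x := tF n i * tF n i) (y := zF n) (.inl (.inl (.inr ⟨i, rfl⟩)))

theorem tt_mul_tt (i j : Fin (n - 1)) (hij : 1 < |(i : ℤ) - (j : ℤ)|) :
    tt n i * tt n j = zt n * tt n j * tt n i :=
  PresentedGroup.mk_eq_mk_of_mul_inv_mem (rels := spinRels n)
    (x := tF n i * tF n j) (y := zF n * tF n j * tF n i) (.inl (.inr ⟨i, j, hij, rfl⟩))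

theorem tt_braid (i j : Fin (n - 1)) (hij : (j : ℕ) = (i : ℕ) + 1) :
    tt n i * tt n j * tt n i = tt n j * tt n i * tt n j :=
  PresentedGroup.mk_eq_mk_of_mul_inv_mem (rels := spinRels n)
    (x := tF n i * tF n j * tF n i) (y := tF n j * tF n i * tF n j) (.inr ⟨i, j, hij, rfl⟩)

theorem zt_mem_center : zt n ∈ Subgroup.center (SpinSym n) := by
  have hle : (⊤ : Subgroup (SpinSym n)) ≤ Subgroup.centralizer {zt n} := by
    rw [← PresentedGroup.closure_range_of, Subgroup.closure_le]
    rintro _ ⟨i | ⟨⟩, rfl⟩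
    · exact Subgroup.mem_centralizer_singleton_iff.2 (zt_mul_tt n i).symm
    · exact Subgroup.mem_centralizer_singleton_iff.2 rfl
  exact Subgroup.mem_center_iff.2 fun g =>
    Subgroup.mem_centralizer_singleton_iff.1 (hle (Subgroup.mem_top g))

end Relations

/-! ### The Clifford representation -/

section Clifford

variable (n : ℕ)

/-- The Gram matrix of the simple roots of type `A`, scaled to have diagonal `-1`. -/
def rootGram : Matrix (Fin (n - 1)) (Fin (n - 1)) ℚ := fun i j =>
  if i = j then -1 else if 1 < |(i : ℤ) - (j : ℤ)| then 0 else 1 / 2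

/-- The quadratic form on the span of the simple roots of type `A`, equal to `-1` on roots. -/
noncomputable def rootForm : QuadraticForm ℚ (Fin (n - 1) → ℚ) :=
  LinearMap.BilinMap.toQuadraticMap (Matrix.toBilin' (rootGram n))

/-- The simple root `i` in the Clifford algebra. -/
noncomputable def cliffordRoot (i : Fin (n - 1)) : CliffordAlgebra (rootForm n) :=
  CliffordAlgebra.ι (rootForm n) (Pi.single i 1)

theorem cliffordRoot_mul_self (i : Fin (n - 1)) : cliffordRoot n i * cliffordRoot n i = -1 := by
  rw [cliffordRoot, CliffordAlgebra.ι_sq_scalar, rootForm,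
    LinearMap.BilinMap.toQuadraticMap_apply, Matrix.toBilin'_single]
  simp [rootGram]

theorem cliffordRoot_mul_add_swap (i j : Fin (n - 1)) :
    cliffordRoot n i * cliffordRoot n j + cliffordRoot n j * cliffordRoot n i =
      algebraMap ℚ _ (rootGram n i j + rootGram n j i) := by
  rw [cliffordRoot, cliffordRoot, CliffordAlgebra.ι_mul_ι_add_swap, rootForm,
    LinearMap.BilinMap.polar_toQuadraticMap, Matrix.toBilin'_single, Matrix.toBilin'_single]

theorem cliffordRoot_anticomm (i j : Fin (n - 1)) (hij : 1 < |(i : ℤ) - (j : ℤ)|) :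
    cliffordRoot n i * cliffordRoot n j = -(cliffordRoot n j * cliffordRoot n i) := by
  have hne : i ≠ j := by rintro rfl; simp at hij
  have hji : 1 < |(j : ℤ) - (i : ℤ)| := by rwa [abs_sub_comm]
  apply eq_neg_of_add_eq_zero_left
  rw [cliffordRoot_mul_add_swap]
  simp [rootGram, hne, hne.symm, hij, hji]

theorem cliffordRoot_braid (i j : Fin (n - 1)) (hij : (j : ℕ) = (i : ℕ) + 1) :
    cliffordRoot n i * cliffordRoot n j * cliffordRoot n i =
      cliffordRoot n j * cliffordRoot n i * cliffordRoot n j := by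
  have hne : i ≠ j := by rintro rfl; omega
  have hadd : cliffordRoot n i * cliffordRoot n j + cliffordRoot n j * cliffordRoot n i = 1 := by
    rw [cliffordRoot_mul_add_swap]
    simp only [rootGram, hne, hne.symm, hij, if_false]
    norm_num
  have hi := cliffordRoot_mul_self n i
  have hj := cliffordRoot_mul_self n j
  calc _ = (1 - cliffordRoot n j * cliffordRoot n i) * cliffordRoot n i := by
        rw [← hadd, add_sub_cancel_right]
    _ = (1 - cliffordRoot n i * cliffordRoot n j) * cliffordRoot n j := by
        rw [sub_mul, sub_mul, mul_assoc, mul_assoc, hi, hj]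
        noncomm_ring
    _ = _ := by rw [← hadd, add_sub_cancel_left]

/-- The simple root `i` as a unit of the Clifford algebra. -/
noncomputable def cliffordUnit (i : Fin (n - 1)) : (CliffordAlgebra (rootForm n))ˣ where
  val := cliffordRoot n i
  inv := -cliffordRoot n i
  val_inv := by rw [mul_neg, cliffordRoot_mul_self, neg_neg]
  inv_val := by rw [neg_mul, cliffordRoot_mul_self, neg_neg]

/-- The images of the generators of the spin extension in the Clifford algebra. -/
noncomputable def cliffordGen : Fin (n - 1) ⊕ Unit → (CliffordAlgebra (rootForm n))ˣ :=
  Sum.elim (cliffordUnit n) fun _ => -1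

theorem lift_cliffordGen_eq_one :
    ∀ r ∈ spinRels n, FreeGroup.lift (cliffordGen n) r = 1 := by
  rintro r ((((rfl | ⟨i, rfl⟩) | ⟨i, rfl⟩) | ⟨i, j, hij, rfl⟩) | ⟨i, j, hij, rfl⟩)
  · simp [zF, cliffordGen]
  all_goals
    rw [map_mul, map_inv, mul_inv_eq_one]
    apply Units.ext
    simp only [zF, tF, map_mul, FreeGroup.lift_apply_of, cliffordGen, Sum.elim_inl, Sum.elim_inr,
      Units.val_mul, Units.val_neg, Units.val_one, cliffordUnit]
  · simp
  · exact cliffordRoot_mul_self n i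
  · rw [cliffordRoot_anticomm n i j hij, neg_mul, neg_mul, one_mul]
  · exact cliffordRoot_braid n i j hij

theorem zt_ne_one : zt n ≠ 1 := by
  intro h
  have hz := congrArg (PresentedGroup.toGroup (lift_cliffordGen_eq_one n)) h
  rw [zt, PresentedGroup.toGroup.of, map_one] at hz
  have hneg : (-1 : CliffordAlgebra (rootForm n)) = 1 := congrArg Units.val hz
  have htwo : algebraMap ℚ (CliffordAlgebra (rootForm n)) 2 = algebraMap ℚ _ 0 := by
    rw [map_zero, map_ofNat, ← one_add_one_eq_two]
    nth_rewrite 1 [← hneg]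
    exact neg_add_cancel 1
  exact two_ne_zero ((algebraMap ℚ (CliffordAlgebra (rootForm n))).injective htwo)

end Clifford

theorem orderOf_zt (n : ℕ) : orderOf (zt n) = 2 :=
  orderOf_eq_prime (by rw [pow_two, zt_mul_self]) (zt_ne_one n)

theorem mem_zpowers_zt {n : ℕ} {g : SpinSym n} :
    g ∈ Subgroup.zpowers (zt n) ↔ g = 1 ∨ g = zt n := by
  constructor
  · rintro ⟨k, rfl⟩
    have hz : zt n ^ (2 : ℤ) = 1 := by rw [zpow_two, zt_mul_self]
    rcases Int.even_or_odd' k with ⟨m, rfl | rfl⟩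
    · left; simp [zpow_mul, hz]
    · right; simp [zpow_add, zpow_mul, hz]
  · rintro (rfl | rfl)
    exacts [one_mem _, Subgroup.mem_zpowers _]

instance normal_zpowers_zt (n : ℕ) : (Subgroup.zpowers (zt n)).Normal :=
  ⟨fun x hx g => by
    have hc := Subgroup.mem_center_iff.1 (Subgroup.zpowers_le.2 (zt_mem_center n) hx) g
    rwa [hc, mul_inv_cancel_right]⟩

theorem ttN_of_lt {n k : ℕ} (hk : k + 1 < n) : ttN n k = tt n ⟨k, by omega⟩ :=
  dif_pos (by omega)

/-- Modulo `z`, the generators `τ̃ᵢ` satisfy the Coxeter relations. -/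
theorem isCoxeterA_mk_ttN (n : ℕ) :
    IsCoxeterA n fun k => (ttN n k : SpinSym n ⧸ Subgroup.zpowers (zt n)) := by
  have hz : (zt n : SpinSym n ⧸ Subgroup.zpowers (zt n)) = 1 :=
    (QuotientGroup.eq_one_iff _).2 (Subgroup.mem_zpowers _)
  refine ⟨fun i hi => ?_, fun i j hij hj => ?_, fun i hi => ?_⟩
  · rw [ttN_of_lt hi, ← QuotientGroup.mk_mul, tt_mul_self, hz]
  · rw [ttN_of_lt hj, ttN_of_lt (by omega : i + 1 < n), Commute, SemiconjBy,
      ← QuotientGroup.mk_mul, tt_mul_tt n _ _ (by rw [lt_abs]; right; push_cast; omega),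
      QuotientGroup.mk_mul, QuotientGroup.mk_mul, hz, one_mul]
  · rw [ttN_of_lt (by omega : i + 1 + 1 < n), ttN_of_lt (by omega : i + 1 < n)]
    simp only [← QuotientGroup.mk_mul]
    rw [tt_braid n _ _ rfl]

theorem mk_mem_closure_ttN (n : ℕ) (g : SpinSym n) :
    (g : SpinSym n ⧸ Subgroup.zpowers (zt n)) ∈ Subgroup.closure
      ((fun k => (ttN n k : SpinSym n ⧸ Subgroup.zpowers (zt n))) '' Set.Iio (n - 1)) := by
  have hle : (⊤ : Subgroup (SpinSym n)) ≤ (Subgroup.closure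
      ((fun k => (ttN n k : SpinSym n ⧸ Subgroup.zpowers (zt n))) '' Set.Iio (n - 1))).comap
      (QuotientGroup.mk' _) := by
    rw [← PresentedGroup.closure_range_of, Subgroup.closure_le]
    rintro _ ⟨i | ⟨⟩, rfl⟩
    · exact Subgroup.subset_closure ⟨i, i.2, congrArg _ (dif_pos i.2)⟩
    · have hz : QuotientGroup.mk' (Subgroup.zpowers (zt n)) (zt n) = 1 :=
        (QuotientGroup.eq_one_iff _).2 (Subgroup.mem_zpowers _)
      exact Subgroup.mem_comap.2 (hz ▸ one_mem _)
  exact hle (Subgroup.mem_top g)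

theorem surjective_of_map_tt {n : ℕ} (hn : 2 ≤ n) (p : SpinSym n →* Equiv.Perm (Fin n))
    (hpt : ∀ i : Fin (n-1), p (tt n i) = Equiv.swap (finL n i) (finR n i)) :
    Function.Surjective p := by
  obtain ⟨m, rfl⟩ : ∃ m, n = m + 1 := ⟨n - 1, by omega⟩
  rw [← MonoidHom.mrange_eq_top, ← top_le_iff, ← Equiv.Perm.mclosure_swap_castSucc_succ,
    Submonoid.closure_le]
  rintro _ ⟨i, rfl⟩
  exact ⟨tt (m + 1) i, hpt i⟩

theorem ker_eq_zpowers_zt {n : ℕ} (hn : 2 ≤ n) (p : SpinSym n →* Equiv.Perm (Fin n))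
    (hpt : ∀ i : Fin (n-1), p (tt n i) = Equiv.swap (finL n i) (finR n i))
    (hpz : p (zt n) = 1) : p.ker = Subgroup.zpowers (zt n) := by
  have hle : Subgroup.zpowers (zt n) ≤ p.ker := Subgroup.zpowers_le.2 hpz
  refine le_antisymm (fun g hg => ?_) hle
  rw [← QuotientGroup.eq_one_iff]
  refine (isCoxeterA_mk_ttN n).eq_one_of_map_eq_one
    (p := QuotientGroup.lift (Subgroup.zpowers (zt n)) p hle) (fun i hi => ?_)
    (by omega : n - 1 < n) (mk_mem_closure_ttN n g) hg
  rw [ttN_of_lt hi]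
  exact hpt _

theorem spin_extension_basic (n : ℕ) (hn : 2 ≤ n)
    (p : SpinSym n →* Equiv.Perm (Fin n))
    (hpt : ∀ i : Fin (n-1), p (tt n i) = Equiv.swap (finL n i) (finR n i))
    (hpz : p (zt n) = 1) :
    Function.Surjective p ∧
    zt n ∈ Subgroup.center (SpinSym n) ∧
    orderOf (zt n) = 2 ∧
    (∀ g : SpinSym n, p g = 1 ↔ g = 1 ∨ g = zt n) ∧
    Nonempty (MonoidHom.ker p ≃* Multiplicative (ZMod 2)) := by
  have hker := ker_eq_zpowers_zt hn p hpt hpz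
  refine ⟨surjective_of_map_tt hn p hpt, zt_mem_center n, orderOf_zt n, fun g => ?_, ?_⟩
  · rw [← mem_zpowers_zt, ← hker, MonoidHom.mem_ker]
  · have : Fact (Nat.Prime 2) := ⟨Nat.prime_two⟩
    refine ⟨mulEquivOfPrimeCardEq (p := 2) ?_ ?_⟩
    · rw [hker, Nat.card_zpowers, orderOf_zt]
    · rw [Nat.card_congr Multiplicative.toAdd, Nat.card_zmod]
end

section
/- For n ≥ 4, the subgroup of S̃_n generated by τ̃_0 and τ̃_2 is isomorphic to the quaternion group Q₈ of order 8; more precisely there is an injective group homomorphism Φ from Q₈ into S̃_n with Φ(i) = τ̃_0, Φ(j) = τ̃_2, Φ(k) = τ̃_0·τ̃_2 and Φ(−1) = z, whose image is the subgroup generated by τ̃_0 and τ̃_2. -/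
open Equiv

namespace QuaternionGroup

variable {G : Type*} [Group G] {n : ℕ} {x y : G}

/-- The homomorphism `ZMod m → G` sending `1` to an element `x` with `x ^ m = 1`. -/
def zmodPow {m : ℕ} (hx : x ^ m = 1) : ZMod m →+ Additive G :=
  ZMod.lift m ⟨zmultiplesHom (Additive G) (Additive.ofMul x), by
    rw [zmultiplesHom_apply, natCast_zsmul, ← ofMul_pow, hx, ofMul_one]⟩

theorem zmodPow_intCast {m : ℕ} (hx : x ^ m = 1) (k : ℤ) :
    (zmodPow hx k).toMul = x ^ k := by
  simp [zmodPow]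

/-- The universal property of the generalized quaternion group: elements `x`, `y` satisfying its
defining relations determine a homomorphism with `a 1 ↦ x` and `xa 0 ↦ y`. -/
def lift (hx : x ^ (2 * n) = 1) (hy : y ^ 2 = x ^ n) (hxy : x * y = y * x⁻¹) :
    QuaternionGroup n →* G :=
  MonoidHom.mk'
    (fun
      | a i => (zmodPow hx i).toMul
      | xa i => y * (zmodPow hx i).toMul)
    (by
      have hsemi (k : ℤ) : x ^ k * y = y * x ^ (-k) := by
        have h : SemiconjBy y x⁻¹ x := hxy.symm
        simpa using (h.zpow_right k).symm
      rintro (i | i) (j | j) <;>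
        obtain ⟨k, rfl⟩ := ZMod.intCast_surjective i <;>
        obtain ⟨l, rfl⟩ := ZMod.intCast_surjective j
      · simp only [a_mul_a, ← Int.cast_add, zmodPow_intCast, zpow_add]
      · simp only [a_mul_xa, ← Int.cast_sub, zmodPow_intCast]
        rw [← mul_assoc, hsemi, mul_assoc, ← zpow_add, neg_add_eq_sub]
      · simp only [xa_mul_a, ← Int.cast_add, zmodPow_intCast, zpow_add, mul_assoc]
      · have hn : ((n : ℕ) : ZMod (2 * n)) = ((n : ℤ) : ZMod (2 * n)) := by simp
        simp only [xa_mul_xa, hn, ← Int.cast_sub, ← Int.cast_add, zmodPow_intCast]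
        rw [mul_assoc, ← mul_assoc (x ^ k), hsemi, mul_assoc, ← mul_assoc y, ← sq, hy,
          ← zpow_natCast, ← zpow_add, ← zpow_add]
        congr 1
        ring)

theorem lift_a_one (hx : x ^ (2 * n) = 1) (hy : y ^ 2 = x ^ n) (hxy : x * y = y * x⁻¹) :
    lift hx hy hxy (a 1) = x := by
  change (zmodPow hx 1).toMul = x
  simpa using zmodPow_intCast hx 1

theorem lift_xa_zero (hx : x ^ (2 * n) = 1) (hy : y ^ 2 = x ^ n) (hxy : x * y = y * x⁻¹) :
    lift hx hy hxy (xa 0) = y := by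
  change y * (zmodPow hx 0).toMul = y
  simp

theorem closure_a_one_xa_zero :
    Subgroup.closure ({a 1, xa 0} : Set (QuaternionGroup n)) = ⊤ := by
  have ha (i : ZMod (2 * n)) :
      a i ∈ Subgroup.closure ({a 1, xa 0} : Set (QuaternionGroup n)) := by
    obtain ⟨k, rfl⟩ := ZMod.intCast_surjective i
    have h1 : (a 1 : QuaternionGroup n) ∈ Subgroup.closure {a 1, xa 0} :=
      Subgroup.subset_closure (by simp)
    induction k using Int.induction_on with
    | zero => simp [a_zero, one_mem]
    | succ k ih => simpa using mul_mem ih h1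
    | pred k ih =>
      have h : (a (((-k - 1 : ℤ)) : ZMod (2 * n))) * a 1 = a ((-k : ℤ) : ZMod (2 * n)) := by simp
      exact (Subgroup.mul_mem_cancel_right _ h1).mp (h ▸ ih)
  refine (Subgroup.eq_top_iff' _).mpr ?_
  rintro (i | i)
  · exact ha i
  · simpa using mul_mem (Subgroup.subset_closure (by simp) :
      (xa 0 : QuaternionGroup n) ∈ Subgroup.closure {a 1, xa 0}) (ha i)

/-- A homomorphism out of `Q₈` not killing the central involution is injective. -/
theorem injective_of_map_a_two_ne_one (f : QuaternionGroup 2 →* G) (hf : f (a 1 ^ 2) ≠ 1) :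
    Function.Injective f := by
  rw [injective_iff_map_eq_one]
  intro g hg
  have key : ∀ g : QuaternionGroup 2, g = 1 ∨ g = a 1 ^ 2 ∨ g ^ 2 = a 1 ^ 2 := by
    decide
  rcases key g with h | h | h
  · exact h
  · exact absurd (h ▸ hg) hf
  · exact absurd (by rw [← h, map_pow, hg, one_pow]) hf

end QuaternionGroup

namespace SpinSym

variable {n : ℕ}

theorem tt_mul_self (i : Fin (n - 1)) : tt n i * tt n i = zt n :=
  PresentedGroup.mk_eq_mk_of_mul_inv_mem (x := tF n i * tF n i) (y := zF n)
    (.inl (.inl (.inr ⟨i, rfl⟩)))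

theorem zt_mul_self : zt n * zt n = 1 :=
  PresentedGroup.one_of_mem (x := zF n * zF n) (.inl (.inl (.inl (.inl rfl))))

theorem tt_mul_tt {i j : Fin (n - 1)} (h : 1 < |(i : ℤ) - (j : ℤ)|) :
    tt n i * tt n j = zt n * tt n j * tt n i :=
  PresentedGroup.mk_eq_mk_of_mul_inv_mem (x := tF n i * tF n j) (y := zF n * tF n j * tF n i)
    (.inl (.inr ⟨i, j, h, rfl⟩))

/-- The symmetric bilinear form `-⟨v, w⟩ / 2` on `ℚⁿ`. -/
noncomputable def rootForm (n : ℕ) : LinearMap.BilinForm ℚ (Fin n → ℚ) :=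
  (-1 / 2 : ℚ) • dotProductBilin ℚ ℚ

/-- The simple root `eᵢ - eᵢ₊₁`. -/
def root (n : ℕ) (i : Fin (n - 1)) : Fin n → ℚ :=
  Pi.single (finL n i) 1 - Pi.single (finR n i) 1

theorem rootForm_root_self (i : Fin (n - 1)) : rootForm n (root n i) (root n i) = -1 := by
  simp [rootForm, root, finL, finR]
  norm_num

theorem rootForm_root_root (i j : Fin (n - 1)) (h : 1 < |(i : ℤ) - (j : ℤ)|) :
    rootForm n (root n i) (root n j) = 0 := by
  rw [lt_abs] at h
  have h1 : (i : ℕ) ≠ j := by omega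
  have h2 : (i : ℕ) ≠ j + 1 := by omega
  have h3 : (i : ℕ) + 1 ≠ j := by omega
  simp [rootForm, root, finL, finR, h1, h2, h3]

theorem rootForm_root_succ (i j : Fin (n - 1)) (h : (j : ℕ) = i + 1) :
    rootForm n (root n i) (root n j) = 1 / 2 := by
  have hi : (i : ℕ) + 1 + 1 ≠ i := by omega
  simp [rootForm, root, finL, finR, h, hi]
  norm_num

theorem rootForm_comm (v w : Fin n → ℚ) : rootForm n v w = rootForm n w v := by
  simp [rootForm, dotProduct_comm]

/-- The Clifford algebra of `rootForm n`, which carries the basic spin representation. -/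
abbrev SpinAlgebra (n : ℕ) := CliffordAlgebra (rootForm n).toQuadraticMap

/-- The Clifford generator attached to a simple root. -/
noncomputable def gen (n : ℕ) (i : Fin (n - 1)) : SpinAlgebra n :=
  CliffordAlgebra.ι _ (root n i)

theorem gen_mul_self (i : Fin (n - 1)) : gen n i * gen n i = -1 := by
  rw [gen, CliffordAlgebra.ι_sq_scalar, LinearMap.BilinMap.toQuadraticMap_apply,
    rootForm_root_self, map_neg, map_one]

theorem gen_mul_add_swap (i j : Fin (n - 1)) :
    gen n i * gen n j + gen n j * gen n i =
      algebraMap ℚ _ (2 * rootForm n (root n i) (root n j)) := by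
  rw [gen, gen, CliffordAlgebra.ι_mul_ι_add_swap, LinearMap.BilinMap.polar_toQuadraticMap,
    rootForm_comm (root n j), two_mul]

theorem gen_anticomm (i j : Fin (n - 1)) (h : 1 < |(i : ℤ) - (j : ℤ)|) :
    gen n i * gen n j = -(gen n j * gen n i) := by
  rw [eq_neg_iff_add_eq_zero, gen_mul_add_swap, rootForm_root_root i j h, mul_zero, map_zero]

theorem gen_braid (i j : Fin (n - 1)) (h : (j : ℕ) = i + 1) :
    gen n i * gen n j * gen n i = gen n j * gen n i * gen n j := by
  have hs : gen n i * gen n j + gen n j * gen n i = 1 := by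
    rw [gen_mul_add_swap, rootForm_root_succ i j h]
    norm_num
  have hj : gen n j * gen n i = 1 - gen n i * gen n j := eq_sub_of_add_eq' hs
  rw [mul_assoc, hj, mul_sub, sub_mul, mul_one, one_mul, ← mul_assoc, gen_mul_self, mul_assoc,
    gen_mul_self]
  noncomm_ring

/-- The Clifford generator as a unit. -/
noncomputable def genUnit (n : ℕ) (i : Fin (n - 1)) : (SpinAlgebra n)ˣ where
  val := gen n i
  inv := -gen n i
  val_inv := by rw [mul_neg, gen_mul_self, neg_neg]
  inv_val := by rw [neg_mul, gen_mul_self, neg_neg]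

/-- The basic spin representation on the generators: `τ̃ᵢ ↦ eᵢ - eᵢ₊₁`, `z ↦ -1`. -/
noncomputable def spinGen (n : ℕ) : Fin (n - 1) ⊕ Unit → (SpinAlgebra n)ˣ :=
  Sum.elim (genUnit n) fun _ => -1

theorem lift_spinGen_eq_one (n : ℕ) : ∀ r ∈ spinRels n, FreeGroup.lift (spinGen n) r = 1 := by
  have hz : FreeGroup.lift (spinGen n) (zF n) = -1 := by simp [zF, spinGen]
  have ht (i : Fin (n - 1)) : FreeGroup.lift (spinGen n) (tF n i) = genUnit n i := by
    simp [tF, spinGen]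
  rintro r ((((rfl | ⟨i, rfl⟩) | ⟨i, rfl⟩) | ⟨i, j, h, rfl⟩) | ⟨i, j, h, rfl⟩)
  · simp [hz]
  · simp [hz, ht]
  · rw [map_mul, map_inv, mul_inv_eq_one, map_mul, hz, ht]
    exact Units.ext (gen_mul_self i)
  · simp only [map_mul, map_inv, mul_inv_eq_one, hz, ht, neg_mul, one_mul]
    exact Units.ext (gen_anticomm i j h)
  · simp only [map_mul, map_inv, mul_inv_eq_one, ht]
    exact Units.ext (gen_braid i j h)

theorem zt_ne_one (n : ℕ) : zt n ≠ 1 := by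
  intro h
  have h1 : PresentedGroup.toGroup (lift_spinGen_eq_one n) (zt n) = -1 :=
    PresentedGroup.toGroup.of _
  rw [h, map_one] at h1
  have h2 : (algebraMap ℚ (SpinAlgebra n)) 1 = algebraMap ℚ (SpinAlgebra n) (-1) := by
    simpa using congrArg Units.val h1
  have h3 : (1 : ℚ) = -1 := (algebraMap ℚ (SpinAlgebra n)).injective h2
  norm_num at h3

end SpinSym

theorem quaternion_subgroup (n : ℕ) (hn : 4 ≤ n) :
    ∃ Φ : QuaternionGroup 2 →* SpinSym n,
      Function.Injective Φ ∧
      Φ (QuaternionGroup.a 1) = tt n ⟨0, by omega⟩ ∧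
      Φ (QuaternionGroup.xa 0) = tt n ⟨2, by omega⟩ ∧
      Φ (QuaternionGroup.a 1 * QuaternionGroup.xa 0) = tt n ⟨0, by omega⟩ * tt n ⟨2, by omega⟩ ∧
      Φ (QuaternionGroup.a 1 ^ 2) = zt n ∧
      Φ.range = Subgroup.closure ({tt n ⟨0, by omega⟩, tt n ⟨2, by omega⟩} : Set (SpinSym n)) := by
  have hz : tt n ⟨0, by omega⟩ ^ 2 = zt n := by rw [sq, SpinSym.tt_mul_self]
  have hx : tt n ⟨0, by omega⟩ ^ (2 * 2) = 1 := by rw [pow_mul, hz, sq, SpinSym.zt_mul_self]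
  have hy : tt n ⟨2, by omega⟩ ^ 2 = tt n ⟨0, by omega⟩ ^ 2 := by
    rw [hz, sq, SpinSym.tt_mul_self]
  have hxy : tt n ⟨0, by omega⟩ * tt n ⟨2, by omega⟩ =
      tt n ⟨2, by omega⟩ * (tt n ⟨0, by omega⟩)⁻¹ := by
    rw [eq_mul_inv_iff_mul_eq, SpinSym.tt_mul_tt (by norm_num), mul_assoc, SpinSym.tt_mul_self,
      ← SpinSym.tt_mul_self ⟨2, by omega⟩, mul_assoc, ← mul_assoc (tt n _), SpinSym.tt_mul_self,
      ← mul_assoc, SpinSym.zt_mul_self, one_mul]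
  have ha := QuaternionGroup.lift_a_one hx hy hxy
  have hxa := QuaternionGroup.lift_xa_zero hx hy hxy
  have ha2 : QuaternionGroup.lift hx hy hxy (QuaternionGroup.a 1 ^ 2) = zt n := by
    rw [map_pow, ha, hz]
  refine ⟨QuaternionGroup.lift hx hy hxy, ?_, ha, hxa, by rw [map_mul, ha, hxa], ha2, ?_⟩
  · exact QuaternionGroup.injective_of_map_a_two_ne_one _ (ha2.trans_ne (SpinSym.zt_ne_one n))
  · rw [MonoidHom.range_eq_map, ← QuaternionGroup.closure_a_one_xa_zero, MonoidHom.map_closure,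
      Set.image_pair, ha, hxa]
end
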